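/- Let G be a finite simple connected C-canonical graph of order n and diameter d with d ≡ 1 (mod 3) and m_G(−1) = n − d − 1, and let P = v_1 v_2 ⋯ v_{d+1} be a diameter path of G. Then: (i) if u is a vertex not on P adjacent to exactly the two consecutive vertices v_m and v_{m+1} of P, then m ≡ 1 (mod 3); (ii) no vertex not on P with exactly one neighbor on P is adjacent to a vertex not on P with exactly two neighbors on P; and (iii) any two distinct vertices not on P each having exactly two neighbors on P are non-adjacent. -/

import Mathlib

attribute [local instance] Classical.propDecidable

/-- The multiplicity of `-1` as an eigenvalue of the adjacency matrix of `G`,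
i.e. the dimension over `ℝ` of the kernel of `A + I`. -/
noncomputable def multNegOne {V : Type*} [Fintype V] (G : SimpleGraph V) : ℕ :=
  Module.finrank ℝ (LinearMap.ker (Matrix.toLin' (G.adjMatrix ℝ + 1)))

/-- The set of indices `i ∈ {1, …, d+1}` such that `x` is adjacent to the vertex `v i`
of the diameter path `v 1, v 2, …, v (d+1)`. -/
noncomputable def pathNbrs {V : Type*} (G : SimpleGraph V) (d : ℕ) (v : ℕ → V) (x : V) :
    Finset ℕ :=
  (Finset.Icc 1 (d + 1)).filter fun i => G.Adj x (v i)

/-- The entries of `A + I`: the indicator of the closed adjacency relation. -/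
noncomputable def closedAdj {V : Type*} (G : SimpleGraph V) (x y : V) : ℤ :=
  if x = y ∨ G.Adj x y then 1 else 0

/-- The solution of `g (j - 1) m + g j m + g (j + 1) m = δ j m` which vanishes for `j ≤ m`. -/
def pathGreen (i m : ℕ) : ℤ :=
  if i ≤ m then 0 else if (i - m) % 3 = 1 then 1 else if (i - m) % 3 = 2 then -1 else 0

/-- The vector on the path `v 1, …, v (d + 1)` with entries `pathGreen i m`. -/
noncomputable def pathVec {V : Type*} (v : ℕ → V) (d m : ℕ) : V → ℝ :=
  ∑ i ∈ Finset.Icc 1 (d + 1), (pathGreen i m : ℝ) • Pi.single (v i) 1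

/-- The linear operator `A + I`. -/
noncomputable abbrev closedAdjLin {V : Type*} [Fintype V] (G : SimpleGraph V) :
    (V → ℝ) →ₗ[ℝ] (V → ℝ) :=
  Matrix.toLin' (G.adjMatrix ℝ + 1)

/-- The Schur complement of `A + I` with respect to the path, on vertices off the path. -/
noncomputable def pathSchur {V : Type*} (G : SimpleGraph V) (d : ℕ) (v : ℕ → V) (u w : V) : ℤ :=
  closedAdj G w u - ∑ m ∈ pathNbrs G d v u, ∑ i ∈ pathNbrs G d v w, pathGreen i m

/-- The standard vector at `u`, corrected along the path. -/
noncomputable def schurVec {V : Type*} (G : SimpleGraph V) (d : ℕ) (v : ℕ → V) (u : V) : V → ℝ :=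
  Pi.single u 1 - ∑ m ∈ pathNbrs G d v u, pathVec v d m

lemma pathGreen_add (i m : ℕ) :
    pathGreen i m + pathGreen (i + 1) m + pathGreen (i + 2) m = if i + 1 = m then 1 else 0 := by
  unfold pathGreen
  split_ifs <;> omega

lemma pathGreen_self (m : ℕ) : pathGreen m m = 0 := by
  simp [pathGreen]

lemma sum_pathGreen_self_one (m : ℕ) :
    ∑ k ∈ ({m, m + 1} : Finset ℕ), ∑ i ∈ ({m, m + 1} : Finset ℕ), pathGreen i k = 1 := by
  simp [pathGreen]

lemma sum_pathGreen_self_two (m : ℕ) :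
    ∑ k ∈ ({m, m + 2} : Finset ℕ), ∑ i ∈ ({m, m + 2} : Finset ℕ), pathGreen i k = -1 := by
  simp [pathGreen]

lemma sum_pathGreen_one_one {m j : ℕ} (hm : m % 3 = 1) (hj : j % 3 = 1) (hmj : m ≠ j) :
    ∑ k ∈ ({m, m + 1} : Finset ℕ), ∑ i ∈ ({j, j + 1} : Finset ℕ), pathGreen i k = 0 := by
  rw [Finset.sum_pair (by omega), Finset.sum_pair (by omega), Finset.sum_pair (by omega)]
  unfold pathGreen
  split_ifs <;> omega

lemma sum_pathGreen_one_two {m j : ℕ} (hm : m % 3 = 1) (hj : j % 3 = 2) :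
    ∑ k ∈ ({m, m + 1} : Finset ℕ), ∑ i ∈ ({j, j + 2} : Finset ℕ), pathGreen i k = 0 := by
  rw [Finset.sum_pair (by omega), Finset.sum_pair (by omega), Finset.sum_pair (by omega)]
  unfold pathGreen
  split_ifs <;> omega

lemma sum_pathGreen_two_one {m j : ℕ} (hm : m % 3 = 2) (hj : j % 3 = 1) :
    ∑ k ∈ ({m, m + 2} : Finset ℕ), ∑ i ∈ ({j, j + 1} : Finset ℕ), pathGreen i k = 0 := by
  rw [Finset.sum_pair (by omega), Finset.sum_pair (by omega), Finset.sum_pair (by omega)]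
  unfold pathGreen
  split_ifs <;> omega

lemma sum_pathGreen_two_two {m j : ℕ} (hm : m % 3 = 2) (hj : j % 3 = 2) (hmj : m ≠ j) :
    ∑ k ∈ ({m, m + 2} : Finset ℕ), ∑ i ∈ ({j, j + 2} : Finset ℕ), pathGreen i k = 0 := by
  rw [Finset.sum_pair (by omega), Finset.sum_pair (by omega), Finset.sum_pair (by omega)]
  unfold pathGreen
  split_ifs <;> omega

lemma pathGreen_pair_one {m k : ℕ} (hm : m % 3 = 1) (hk : k % 3 = 0) :
    pathGreen m k + pathGreen (m + 1) k = 0 ∧ pathGreen k m + pathGreen k (m + 1) = 0 := by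
  unfold pathGreen
  split_ifs <;> omega

lemma pathGreen_pair_two {m k : ℕ} (hm : m % 3 = 2) (hk : k % 3 = 0) :
    pathGreen m k + pathGreen (m + 2) k = pathGreen k m + pathGreen k (m + 2) ∧
      (pathGreen k m + pathGreen k (m + 2) = 0 ∨ pathGreen k m + pathGreen k (m + 2) = 1) := by
  unfold pathGreen
  split_ifs <;> omega

lemma exists_generator_of_finrank_ker_eq_one {E F : Type*} [AddCommGroup E] [Module ℝ E]
    [AddCommGroup F] [Module ℝ F] (ρ : E →ₗ[ℝ] F)
    (h : Module.finrank ℝ (LinearMap.ker ρ) = 1) :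
    ∃ k : E, ∀ x, ρ x = 0 → ∃ c : ℝ, c • k = x := by
  obtain ⟨k, -, hk⟩ := finrank_eq_one_iff'.1 h
  refine ⟨k, fun x hx => ?_⟩
  obtain ⟨c, hc⟩ := hk ⟨x, hx⟩
  exact ⟨c, congrArg Subtype.val hc⟩

lemma sum_Icc_consecutive (f : ℕ → ℤ) (N j : ℕ) (h0 : f 0 = 0) (hj : 1 ≤ j) (hjN : j ≤ N) :
    ∑ i ∈ Finset.Icc 1 N, (if j = i ∨ i + 1 = j ∨ j + 1 = i then f i else 0) =
      f (j - 1) + f j + if j + 1 ≤ N then f (j + 1) else 0 := by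
  have hsplit : ∀ i ∈ Finset.Icc 1 N, (if j = i ∨ i + 1 = j ∨ j + 1 = i then f i else 0) =
      (if j - 1 = i then f i else 0) + (if j = i then f i else 0) +
        (if j + 1 = i then f i else 0) := by
    intro i hi
    rw [Finset.mem_Icc] at hi
    split_ifs <;> omega
  rw [Finset.sum_congr rfl hsplit, Finset.sum_add_distrib, Finset.sum_add_distrib,
    Finset.sum_ite_eq, Finset.sum_ite_eq, Finset.sum_ite_eq]
  simp only [Finset.mem_Icc]
  rcases Nat.lt_or_ge 1 j with h | h
  · rw [if_pos (by omega), if_pos ⟨hj, hjN⟩]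
    simp
  · obtain rfl : j = 1 := by omega
    simp [h0, hjN]

section PathGraph

variable {V : Type*} [Fintype V] {G : SimpleGraph V} {d : ℕ} {v : ℕ → V}

omit [Fintype V] in
lemma closedAdj_comm (x y : V) : closedAdj G x y = closedAdj G y x := by
  simp only [closedAdj, G.adj_comm x y, eq_comm (a := x)]

lemma closedAdjLin_single (x w : V) :
    closedAdjLin G (Pi.single x 1) w = (closedAdj G w x : ℝ) := by
  rw [closedAdjLin, Matrix.toLin'_apply, Matrix.mulVec_single_one]
  by_cases h : w = x
  · subst h; simp [closedAdj]
  · simp [closedAdj, h]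

lemma closedAdjLin_pathVec (m : ℕ) (w : V) :
    closedAdjLin G (pathVec v d m) w =
      ((∑ i ∈ Finset.Icc 1 (d + 1), closedAdj G w (v i) * pathGreen i m : ℤ) : ℝ) := by
  rw [pathVec, map_sum, Finset.sum_apply]
  push_cast
  refine Finset.sum_congr rfl fun i _ => ?_
  rw [map_smul, Pi.smul_apply, closedAdjLin_single, smul_eq_mul, mul_comm]

lemma closedAdjLin_pathVec_off (m : ℕ) (w : V) (hw : ∀ i ∈ Finset.Icc 1 (d + 1), w ≠ v i) :
    closedAdjLin G (pathVec v d m) w =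
      ((∑ i ∈ pathNbrs G d v w, pathGreen i m : ℤ) : ℝ) := by
  rw [closedAdjLin_pathVec, pathNbrs, Finset.sum_filter]
  congr 1
  refine Finset.sum_congr rfl fun i hi => ?_
  simp [closedAdj, hw i hi]

variable (hpath : ∀ i ∈ Finset.Icc 1 (d + 1), ∀ j ∈ Finset.Icc 1 (d + 1),
      G.dist (v i) (v j) = max i j - min i j)

include hpath

omit [Fintype V] in
lemma path_injOn : Set.InjOn v (Finset.Icc 1 (d + 1) : Finset ℕ) := by
  intro i hi j hj hij
  have h := hpath i hi j hj
  rw [hij, SimpleGraph.dist_self] at h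
  omega

omit [Fintype V] in
lemma closedAdj_path {i j : ℕ} (hi : i ∈ Finset.Icc 1 (d + 1)) (hj : j ∈ Finset.Icc 1 (d + 1)) :
    closedAdj G (v j) (v i) = if j = i ∨ i + 1 = j ∨ j + 1 = i then 1 else 0 := by
  unfold closedAdj
  congr 1
  have h := hpath j hj i hi
  rw [← SimpleGraph.dist_eq_one_iff_adj, h, (path_injOn hpath).eq_iff hj hi]
  apply propext
  omega

lemma closedAdjLin_pathVec_path (m j : ℕ) (hj : j ∈ Finset.Icc 1 (d + 1)) :
    closedAdjLin G (pathVec v d m) (v j) =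
      (((if j = m then 1 else 0) - if j = d + 1 then pathGreen (d + 2) m else 0 : ℤ) : ℝ) := by
  rw [closedAdjLin_pathVec]
  congr 1
  have h1 : ∀ i ∈ Finset.Icc 1 (d + 1), closedAdj G (v j) (v i) * pathGreen i m =
      if j = i ∨ i + 1 = j ∨ j + 1 = i then pathGreen i m else 0 := by
    intro i hi
    rw [closedAdj_path hpath hi hj, ite_mul, one_mul, zero_mul]
  rw [Finset.mem_Icc] at hj
  rw [Finset.sum_congr rfl h1, sum_Icc_consecutive _ _ _ (by simp [pathGreen]) hj.1 hj.2]
  obtain ⟨k, rfl⟩ : ∃ k, j = k + 1 := ⟨j - 1, by omega⟩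
  rw [← pathGreen_add k m]
  by_cases hk : k = d
  · subst hk; simp
  · rw [if_pos (by omega), if_neg (by omega)]; simp

lemma path_length_le_card : d + 1 ≤ Fintype.card V := by
  have := Finset.card_le_card (Finset.subset_univ ((Finset.Icc 1 (d + 1)).image v))
  rw [Finset.card_image_of_injOn (path_injOn hpath)] at this
  simpa using this

omit [Fintype V] in
lemma adj_path_le (hconn : G.Connected) {u : V} {i j : ℕ}
    (hi : i ∈ pathNbrs G d v u) (hj : j ∈ pathNbrs G d v u) :
    j ≤ i + 2 := by
  simp only [pathNbrs, Finset.mem_filter] at hi hj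
  have h := hpath i hi.1 j hj.1
  have h1 := hconn.dist_triangle (u := v i) (v := u) (w := v j)
  rw [SimpleGraph.dist_eq_one_iff_adj.2 hi.2.symm, SimpleGraph.dist_eq_one_iff_adj.2 hj.2] at h1
  omega

omit [Fintype V] in
lemma pathNbrs_eq_of_card_eq_two (hconn : G.Connected) {u : V} (h : (pathNbrs G d v u).card = 2) :
    ∃ m, 1 ≤ m ∧ (pathNbrs G d v u = {m, m + 1} ∨ pathNbrs G d v u = {m, m + 2}) := by
  have key : ∀ i j, i < j → pathNbrs G d v u = {i, j} →
      ∃ m, 1 ≤ m ∧ (pathNbrs G d v u = {m, m + 1} ∨ pathNbrs G d v u = {m, m + 2}) := by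
    intro i j hlt hu
    have hi : i ∈ pathNbrs G d v u := by simp [hu]
    have hle := adj_path_le hpath hconn hi (j := j) (by simp [hu])
    simp only [pathNbrs, Finset.mem_filter, Finset.mem_Icc] at hi
    refine ⟨i, hi.1.1, ?_⟩
    rcases (by omega : j = i + 1 ∨ j = i + 2) with rfl | rfl
    · exact .inl hu
    · exact .inr hu
  obtain ⟨i, j, hij, hu⟩ := Finset.card_eq_two.1 h
  rcases lt_or_gt_of_ne hij with hlt | hlt
  · exact key i j hlt hu
  · exact key j i hlt (by rw [hu, Finset.pair_comm])

variable (hmult : multNegOne G = Fintype.card V - d - 1)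

include hmult

/-- Vectors in the range of `A + I` vanishing at `v 1, …, v d` form a line. -/
lemma mul_eq_mul_of_vanish (f g : V → ℝ)
    (hf : ∀ j ∈ Finset.Icc 1 d, closedAdjLin G f (v j) = 0)
    (hg : ∀ j ∈ Finset.Icc 1 d, closedAdjLin G g (v j) = 0) (a b : V) :
    closedAdjLin G f a * closedAdjLin G g b = closedAdjLin G f b * closedAdjLin G g a := by
  have hrank : Module.finrank ℝ (LinearMap.range (closedAdjLin G)) = d + 1 := by
    have h := LinearMap.finrank_range_add_finrank_ker (closedAdjLin G)
    have hle := path_length_le_card hpath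
    rw [show Module.finrank ℝ (LinearMap.ker (closedAdjLin G)) = _ from hmult,
      Module.finrank_fintype_fun_eq_card] at h
    omega
  let ρ : LinearMap.range (closedAdjLin G) →ₗ[ℝ] (Fin d → ℝ) :=
    (LinearMap.funLeft ℝ ℝ fun j : Fin d => v (j + 1)) ∘ₗ Submodule.subtype _
  have hsurj : LinearMap.range ρ = ⊤ := by
    rw [LinearMap.range_eq_top]
    intro t
    refine ⟨⟨closedAdjLin G (∑ m : Fin d, t m • pathVec v d (m + 1)), _, rfl⟩, ?_⟩
    funext j
    change closedAdjLin G (∑ m : Fin d, t m • pathVec v d (m + 1)) (v (j + 1)) = t j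
    rw [map_sum, Finset.sum_apply, Finset.sum_eq_single j]
    · rw [map_smul, Pi.smul_apply, closedAdjLin_pathVec_path hpath _ _
        (Finset.mem_Icc.2 ⟨by omega, by omega⟩)]
      simp [(show (j : ℕ) ≠ d by omega)]
    · intro m _ hm
      rw [map_smul, Pi.smul_apply, closedAdjLin_pathVec_path hpath _ _
        (Finset.mem_Icc.2 ⟨by omega, by omega⟩)]
      have : (j : ℕ) ≠ m := fun h => hm (Fin.ext h.symm)
      simp [(show (j : ℕ) ≠ d by omega), this]
    · simp
  have hker : Module.finrank ℝ (LinearMap.ker ρ) = 1 := by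
    have h := LinearMap.finrank_range_add_finrank_ker ρ
    rw [hsurj, finrank_top, hrank, Module.finrank_fintype_fun_eq_card, Fintype.card_fin] at h
    omega
  obtain ⟨k, hk⟩ := exists_generator_of_finrank_ker_eq_one ρ hker
  have hmem : ∀ f : V → ℝ, (∀ j ∈ Finset.Icc 1 d, closedAdjLin G f (v j) = 0) →
      ∃ c : ℝ, ∀ x, closedAdjLin G f x = c * k.1 x := by
    intro f hf
    obtain ⟨c, hc⟩ := hk ⟨closedAdjLin G f, f, rfl⟩
      (funext fun j => hf _ (Finset.mem_Icc.2 ⟨by omega, by omega⟩))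
    refine ⟨c, fun x => ?_⟩
    have := congrArg (fun y => y.1 x) hc
    simpa using this.symm
  obtain ⟨c, hc⟩ := hmem f hf
  obtain ⟨c', hc'⟩ := hmem g hg
  rw [hc, hc, hc', hc']
  ring

omit hmult in
lemma closedAdjLin_schurVec_path (u : V) (hu : ∀ i ∈ Finset.Icc 1 (d + 1), u ≠ v i) (j : ℕ)
    (hj : j ∈ Finset.Icc 1 (d + 1)) :
    closedAdjLin G (schurVec G d v u) (v j) =
      ((if j = d + 1 then ∑ m ∈ pathNbrs G d v u, pathGreen (d + 2) m else 0 : ℤ) : ℝ) := by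
  have h1 : ∀ m ∈ pathNbrs G d v u, closedAdjLin G (pathVec v d m) (v j) = _ :=
    fun m _ => closedAdjLin_pathVec_path hpath m j hj
  have h2 : closedAdj G (v j) u = ∑ m ∈ pathNbrs G d v u, if j = m then 1 else 0 := by
    rw [Finset.sum_ite_eq]
    have h3 := hu j hj
    simp only [closedAdj, pathNbrs, Finset.mem_filter, hj, true_and, h3.symm, false_or,
      G.adj_comm u]
  rw [schurVec, map_sub, map_sum, Pi.sub_apply, Finset.sum_apply, Finset.sum_congr rfl h1,
    closedAdjLin_single, h2]
  push_cast
  rw [Finset.sum_sub_distrib]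
  split_ifs <;> simp

omit hpath hmult in
lemma closedAdjLin_schurVec_off (u w : V) (hw : ∀ i ∈ Finset.Icc 1 (d + 1), w ≠ v i) :
    closedAdjLin G (schurVec G d v u) w = (pathSchur G d v u w : ℝ) := by
  have h1 : ∀ m ∈ pathNbrs G d v u, closedAdjLin G (pathVec v d m) w = _ :=
    fun m _ => closedAdjLin_pathVec_off m w hw
  rw [schurVec, map_sub, map_sum, Pi.sub_apply, Finset.sum_apply, Finset.sum_congr rfl h1,
    closedAdjLin_single, pathSchur]
  push_cast
  rfl

omit hmult in
lemma closedAdjLin_schurVec_eq_zero (u : V) (hu : ∀ i ∈ Finset.Icc 1 (d + 1), u ≠ v i) (j : ℕ)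
    (hj : j ∈ Finset.Icc 1 d) : closedAdjLin G (schurVec G d v u) (v j) = 0 := by
  rw [Finset.mem_Icc] at hj
  rw [closedAdjLin_schurVec_path hpath u hu j (Finset.mem_Icc.2 ⟨hj.1, by omega⟩),
    if_neg (by omega), Int.cast_zero]

lemma pathSchur_mul_eq (u w a b : V) (hu : ∀ i ∈ Finset.Icc 1 (d + 1), u ≠ v i)
    (hw : ∀ i ∈ Finset.Icc 1 (d + 1), w ≠ v i) (ha : ∀ i ∈ Finset.Icc 1 (d + 1), a ≠ v i)
    (hb : ∀ i ∈ Finset.Icc 1 (d + 1), b ≠ v i) :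
    pathSchur G d v u a * pathSchur G d v w b = pathSchur G d v u b * pathSchur G d v w a := by
  have h := mul_eq_mul_of_vanish hpath hmult (schurVec G d v u) (schurVec G d v w)
    (closedAdjLin_schurVec_eq_zero hpath u hu)
    (closedAdjLin_schurVec_eq_zero hpath w hw) a b
  simp only [closedAdjLin_schurVec_off _ _ ha, closedAdjLin_schurVec_off _ _ hb] at h
  exact_mod_cast h

/-- Neighbourhoods on the path are orthogonal to the kernel vector `(1, -1, 0, 1, -1, 0, …)`. -/
lemma sum_pathNbrs_pathGreen_zero (hd3 : d % 3 = 1) (u : V)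
    (hu : ∀ i ∈ Finset.Icc 1 (d + 1), u ≠ v i) :
    ∑ i ∈ pathNbrs G d v u, pathGreen i 0 = 0 := by
  have hend : ∀ j ∈ Finset.Icc 1 (d + 1), closedAdjLin G (pathVec v d 0) (v j) = 0 := by
    intro j hj
    rw [closedAdjLin_pathVec_path hpath 0 j hj]
    rw [Finset.mem_Icc] at hj
    have : pathGreen (d + 2) 0 = 0 := by
      unfold pathGreen
      split_ifs <;> omega
    simp [this, show j ≠ 0 by omega]
  have hlast : d + 1 ∈ Finset.Icc 1 (d + 1) := Finset.mem_Icc.2 ⟨by omega, le_rfl⟩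
  have h := mul_eq_mul_of_vanish hpath hmult (pathVec v d 0) (schurVec G d v u)
    (fun j hj => hend j (Finset.Icc_subset_Icc_right (by omega) hj))
    (closedAdjLin_schurVec_eq_zero hpath u hu) u (v (d + 1))
  rw [hend _ hlast, zero_mul, closedAdjLin_pathVec_off 0 u hu,
    closedAdjLin_schurVec_path hpath u hu _ hlast, if_pos rfl] at h
  have hneg : ∑ m ∈ pathNbrs G d v u, pathGreen (d + 2) m =
      -∑ m ∈ pathNbrs G d v u, pathGreen m 0 := by
    rw [← Finset.sum_neg_distrib]
    refine Finset.sum_congr rfl fun m hm => ?_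
    simp only [pathNbrs, Finset.mem_filter, Finset.mem_Icc] at hm
    unfold pathGreen
    split_ifs <;> omega
  rw [hneg] at h
  norm_cast at h
  simpa using h

lemma pathNbrs_mod_three (hd3 : d % 3 = 1) (u : V)
    (hu : ∀ i ∈ Finset.Icc 1 (d + 1), u ≠ v i) (m : ℕ) :
    (pathNbrs G d v u = {m} → m % 3 = 0) ∧ (pathNbrs G d v u = {m, m + 1} → m % 3 = 1) ∧
      (1 ≤ m → pathNbrs G d v u = {m, m + 2} → m % 3 = 2) := by
  have h := sum_pathNbrs_pathGreen_zero hpath hmult hd3 u hu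
  refine ⟨fun hm => ?_, fun hm => ?_, fun h1 hm => ?_⟩
  · rw [hm, Finset.sum_singleton] at h
    unfold pathGreen at h
    split_ifs at h <;> omega
  · have h1 : m ∈ pathNbrs G d v u := by simp [hm]
    simp only [pathNbrs, Finset.mem_filter, Finset.mem_Icc] at h1
    rw [hm, Finset.sum_pair (by omega)] at h
    unfold pathGreen at h
    split_ifs at h <;> omega
  · rw [hm, Finset.sum_pair (by omega)] at h
    unfold pathGreen at h
    split_ifs at h <;> omega

lemma eq_of_adj_of_pathNbrs_eq
    (hcanon : ∀ a b : V, (∀ z : V, (z = a ∨ G.Adj a z) ↔ (z = b ∨ G.Adj b z)) → a = b)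
    (u w : V) (hu : ∀ i ∈ Finset.Icc 1 (d + 1), u ≠ v i)
    (hw : ∀ i ∈ Finset.Icc 1 (d + 1), w ≠ v i) (hadj : G.Adj u w)
    (hN : pathNbrs G d v u = pathNbrs G d v w) : u = w := by
  have key : ∀ a, (∀ i ∈ Finset.Icc 1 (d + 1), a ≠ v i) → closedAdj G a u = closedAdj G a w := by
    intro a ha
    by_contra hne
    have huu : closedAdj G u u = 1 := by simp [closedAdj]
    have hww : closedAdj G w w = 1 := by simp [closedAdj]
    have huw : closedAdj G u w = 1 := by simp [closedAdj, hadj]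
    have hwu : closedAdj G w u = 1 := by simp [closedAdj, hadj.symm]
    have h1 := pathSchur_mul_eq hpath hmult u a a u hu ha ha hu
    have h2 := pathSchur_mul_eq hpath hmult w a a u hw ha ha hu
    have h3 := pathSchur_mul_eq hpath hmult u a a w hu ha ha hw
    have h4 := pathSchur_mul_eq hpath hmult w a a w hw ha ha hw
    have h5 : pathSchur G d v u u = pathSchur G d v w u := by simp only [pathSchur, hN, huu, huw]
    have h6 : pathSchur G d v u w = pathSchur G d v w w := by simp only [pathSchur, hN, hww, hwu]
    have h7 : pathSchur G d v u a - pathSchur G d v w a ≠ 0 := by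
      simp only [pathSchur, hN]
      intro h
      apply hne
      linarith
    have h8 : pathSchur G d v a u = 0 := by
      refine (mul_eq_zero.1 ?_).resolve_left h7
      rw [sub_mul, h1, h2, h5, sub_self]
    have h9 : pathSchur G d v a w = 0 := by
      refine (mul_eq_zero.1 ?_).resolve_left h7
      rw [sub_mul, h3, h4, h6, sub_self]
    apply hne
    rw [closedAdj_comm a u, closedAdj_comm a w]
    simp only [pathSchur, hN] at h8 h9
    linarith
  refine hcanon u w fun z => ?_
  by_cases hz : ∀ i ∈ Finset.Icc 1 (d + 1), z ≠ v i
  · have h := key z hz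
    simp only [closedAdj, G.adj_comm z] at h
    split_ifs at h <;> tauto
  · push Not at hz
    obtain ⟨i, hi, rfl⟩ := hz
    have h : i ∈ pathNbrs G d v u ↔ i ∈ pathNbrs G d v w := by rw [hN]
    simp only [pathNbrs, Finset.mem_filter, hi, true_and] at h
    simp [(hu i hi).symm, (hw i hi).symm, h]

end PathGraph

lemma pathSchur_mul_comm_of_adj {V : Type*} [Fintype V] {G : SimpleGraph V} {d : ℕ} {v : ℕ → V}
    (hpath : ∀ i ∈ Finset.Icc 1 (d + 1), ∀ j ∈ Finset.Icc 1 (d + 1),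
      G.dist (v i) (v j) = max i j - min i j)
    (hmult : multNegOne G = Fintype.card V - d - 1)
    (u w : V) (hu : ∀ i ∈ Finset.Icc 1 (d + 1), u ≠ v i)
    (hw : ∀ i ∈ Finset.Icc 1 (d + 1), w ≠ v i) (hadj : G.Adj u w) :
    (1 - ∑ m ∈ pathNbrs G d v u, ∑ i ∈ pathNbrs G d v u, pathGreen i m) *
        (1 - ∑ m ∈ pathNbrs G d v w, ∑ i ∈ pathNbrs G d v w, pathGreen i m) =
      (1 - ∑ m ∈ pathNbrs G d v u, ∑ i ∈ pathNbrs G d v w, pathGreen i m) *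
        (1 - ∑ m ∈ pathNbrs G d v w, ∑ i ∈ pathNbrs G d v u, pathGreen i m) := by
  have h := pathSchur_mul_eq hpath hmult u w u w hu hw hu hw
  simpa [pathSchur, closedAdj, hadj, hadj.symm] using h

theorem stmt_19 {V : Type*} [Fintype V] (G : SimpleGraph V) (n d : ℕ)
    (hconn : G.Connected)
    (hcard : Fintype.card V = n)
    (hcanon : ∀ a b : V, (∀ z : V, (z = a ∨ G.Adj a z) ↔ (z = b ∨ G.Adj b z)) → a = b)
    (hd3 : d % 3 = 1)
    (hdiam : ∀ a b : V, G.dist a b ≤ d)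
    (v : ℕ → V)
    (hpath : ∀ i ∈ Finset.Icc 1 (d + 1), ∀ j ∈ Finset.Icc 1 (d + 1),
      G.dist (v i) (v j) = max i j - min i j)
    (hmult : multNegOne G = n - d - 1) :
    (∀ u : V, (∀ i ∈ Finset.Icc 1 (d + 1), u ≠ v i) → ∀ m : ℕ,
      pathNbrs G d v u = {m, m + 1} → m % 3 = 1) ∧
    (∀ x u : V, (∀ i ∈ Finset.Icc 1 (d + 1), x ≠ v i) →
      (∀ i ∈ Finset.Icc 1 (d + 1), u ≠ v i) →
      (pathNbrs G d v x).card = 1 → (pathNbrs G d v u).card = 2 → ¬ G.Adj x u) ∧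
    (∀ u w : V, u ≠ w → (∀ i ∈ Finset.Icc 1 (d + 1), u ≠ v i) →
      (∀ i ∈ Finset.Icc 1 (d + 1), w ≠ v i) →
      (pathNbrs G d v u).card = 2 → (pathNbrs G d v w).card = 2 → ¬ G.Adj u w) := by
  subst hcard
  have hmod := pathNbrs_mod_three hpath hmult hd3
  have hmul := pathSchur_mul_comm_of_adj hpath hmult
  refine ⟨fun u hu m => (hmod u hu m).2.1, ?_, ?_⟩
  · intro x u hx hu hcx hcu hadj
    obtain ⟨k, hk⟩ := Finset.card_eq_one.1 hcx
    have hk3 := (hmod x hx k).1 hk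
    have h := hmul x u hx hu hadj
    obtain ⟨m, hm1, hm | hm⟩ := pathNbrs_eq_of_card_eq_two hpath hconn hcu
    · have hm3 := (hmod u hu m).2.1 hm
      have e := pathGreen_pair_one hm3 hk3
      rw [hm, hk, sum_pathGreen_self_one] at h
      simp [e, pathGreen_self] at h
    · have hm3 := (hmod u hu m).2.2 hm1 hm
      have e := pathGreen_pair_two hm3 hk3
      rw [hm, hk, sum_pathGreen_self_two] at h
      simp only [Finset.sum_singleton, Finset.sum_pair (show m ≠ m + 2 by omega),
        pathGreen_self, e.1] at h
      rcases e.2 with e2 | e2 <;> rw [e2] at h <;> omega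
  · intro u w hne hu hw hcu hcw hadj
    have h := hmul u w hu hw hadj
    have htwin : pathNbrs G d v u ≠ pathNbrs G d v w := fun hN =>
      hne (eq_of_adj_of_pathNbrs_eq hpath hmult hcanon u w hu hw hadj hN)
    obtain ⟨m, hm1, hm | hm⟩ := pathNbrs_eq_of_card_eq_two hpath hconn hcu <;>
    obtain ⟨j, hj1, hj | hj⟩ := pathNbrs_eq_of_card_eq_two hpath hconn hcw <;>
    rw [hm, hj] at h htwin
    · have hm3 := (hmod u hu m).2.1 hm
      have hj3 := (hmod w hw j).2.1 hj
      have hmj : m ≠ j := by rintro rfl; exact htwin rfl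
      rw [sum_pathGreen_self_one, sum_pathGreen_self_one,
        sum_pathGreen_one_one hm3 hj3 hmj, sum_pathGreen_one_one hj3 hm3 hmj.symm] at h
      omega
    · have hm3 := (hmod u hu m).2.1 hm
      have hj3 := (hmod w hw j).2.2 hj1 hj
      rw [sum_pathGreen_self_one, sum_pathGreen_self_two,
        sum_pathGreen_one_two hm3 hj3, sum_pathGreen_two_one hj3 hm3] at h
      omega
    · have hm3 := (hmod u hu m).2.2 hm1 hm
      have hj3 := (hmod w hw j).2.1 hj
      rw [sum_pathGreen_self_one, sum_pathGreen_self_two,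
        sum_pathGreen_one_two hj3 hm3, sum_pathGreen_two_one hm3 hj3] at h
      omega
    · have hm3 := (hmod u hu m).2.2 hm1 hm
      have hj3 := (hmod w hw j).2.2 hj1 hj
      have hmj : m ≠ j := by rintro rfl; exact htwin rfl
      rw [sum_pathGreen_self_two, sum_pathGreen_self_two,
        sum_pathGreen_two_two hm3 hj3 hmj, sum_pathGreen_two_two hj3 hm3 hmj.symm] at h
      omega
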